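/- Let n ≥ 3, C₀ > 0, r > 0 and m > 0. Set A = (m + (3C₀/(8n)) r²) / ((r/2)^{2−n} − r^{2−n}) and define w : ℝ^n \ {0} → ℝ by w(y) = (C₀/(2n)) (|y|² − r²) + A (|y|^{2−n} − r^{2−n}). Then: (i) w is smooth on ℝ^n \ {0} with Δw = C₀ everywhere; (ii) w = 0 on the sphere {|y| = r} and w = m on the sphere {|y| = r/2}; and (iii) there exist r₀ > 0 depending only on n and C₀, and c > 0 depending only on n, such that if r ≤ r₀ and m ≥ r, then w > 0 on the open annulus {r/2 < |y| < r} and |∇w(y)| ≥ c·m/r for every y with |y| = r. -/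

import Mathlib

/-!
The barrier is radial, and its gradient is `∇w(y) = g(|y|) y` with
`g(t) = C₀/n - (n-2) A t^{-n}` (`hasFDerivAt_barrierW`). Differentiating once more, the trace of
the Hessian is `n g(|y|) + |y| g'(|y|) = C₀`, since the two contributions of `t^{-n}` cancel.

For the quantitative part put `k = n - 2`. Then `A = (m + (3C₀/(8n)) r²) r^k / (2^k - 1)`, so with
`c = k / (2 (2^k - 1))` one has `k A r^{-k} ≥ 2 c m`. If `r ≤ c n / C₀` and `m ≥ r`, the term
`(C₀/n) r²` is at most `c m`, hence `-r² g(r) ≥ c m` (`barrier_slope`). This is the gradient bound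
on the outer sphere. Bernoulli's inequality gives
`t^{-k} - r^{-k} ≥ k r^{-k-1} (r - t)` for `0 < t ≤ r`, and `r² - t² ≤ 2 r (r - t)`, so
`w ≥ -r g(r) (r - t) > 0` inside.
-/

/-- The constant `A = (m + (3C₀/(8n)) r²) / ((r/2)^{2-n} − r^{2-n})` of the barrier. -/
noncomputable def barrierA (n : ℕ) (C₀ r m : ℝ) : ℝ :=
  (m + 3 * C₀ / (8 * n) * r ^ 2) / ((r / 2) ^ ((2 : ℝ) - n) - r ^ ((2 : ℝ) - n))

/-- The barrier `w(y) = (C₀/(2n))(|y|² − r²) + A (|y|^{2-n} − r^{2-n})`. -/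
noncomputable def barrierW (n : ℕ) (C₀ r m : ℝ) (y : EuclideanSpace ℝ (Fin n)) : ℝ :=
  C₀ / (2 * n) * (‖y‖ ^ 2 - r ^ 2) +
    barrierA n C₀ r m * (‖y‖ ^ ((2 : ℝ) - n) - r ^ ((2 : ℝ) - n))

/-- The gradient of a real power of the norm, with no restriction on the exponent. -/
lemma hasFDerivAt_norm_rpow_of_ne {n : ℕ} (p : ℝ) {y : EuclideanSpace ℝ (Fin n)} (hy : y ≠ 0) :
    HasFDerivAt (fun z : EuclideanSpace ℝ (Fin n) => ‖z‖ ^ p)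
      ((p * ‖y‖ ^ (p - 2)) • innerSL ℝ y) y := by
  have hpos : 0 < ‖y‖ := norm_pos_iff.mpr hy
  have h1 : HasFDerivAt (fun z : EuclideanSpace ℝ (Fin n) => ‖z‖ ^ 2) (2 • innerSL ℝ y) y :=
    (hasStrictFDerivAt_norm_sq y).hasFDerivAt
  have h2 := h1.rpow_const (p := p / 2) (Or.inl (by positivity))
  have e : ∀ (t q : ℝ), 0 ≤ t → (t ^ 2) ^ q = t ^ (2 * q) := fun t q ht => by
    rw [← Real.rpow_natCast, ← Real.rpow_mul ht]; norm_num
  have hf : (fun z : EuclideanSpace ℝ (Fin n) => ‖z‖ ^ p) = fun z => (‖z‖ ^ 2) ^ (p / 2) := by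
    funext z
    rw [e _ _ (norm_nonneg z)]
    congr 1; ring
  rw [hf]
  refine h2.congr_fderiv ?_
  rw [e _ _ hpos.le, show 2 * (p / 2 - 1) = p - 2 by ring]
  ext v
  simp only [smul_apply, smul_eq_mul, nsmul_eq_mul]
  push_cast
  ring

/-- `∇w(y) = (C₀/n - (n-2) A |y|^{-n}) y`. -/
lemma hasFDerivAt_barrierW {n : ℕ} (hn : 3 ≤ n) (C₀ r m : ℝ) {y : EuclideanSpace ℝ (Fin n)}
    (hy : y ≠ 0) :
    HasFDerivAt (barrierW n C₀ r m)
      ((C₀ / n + barrierA n C₀ r m * (2 - n) * ‖y‖ ^ (-(n : ℝ))) • innerSL ℝ y) y := by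
  have h1 : HasFDerivAt (fun z : EuclideanSpace ℝ (Fin n) => ‖z‖ ^ 2) (2 • innerSL ℝ y) y :=
    (hasStrictFDerivAt_norm_sq y).hasFDerivAt
  have h2 := hasFDerivAt_norm_rpow_of_ne ((2 : ℝ) - n) hy
  have h3 := ((h1.sub_const (r ^ 2)).const_mul (C₀ / (2 * n))).add
    ((h2.sub_const (r ^ ((2 : ℝ) - n))).const_mul (barrierA n C₀ r m))
  refine h3.congr_fderiv ?_
  have hn0 : (n : ℝ) ≠ 0 := by positivity
  ext v
  simp only [smul_apply, add_apply, smul_eq_mul,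
    nsmul_eq_mul]
  rw [show (2 : ℝ) - n - 2 = -n by ring]
  push_cast
  field_simp

lemma contDiffOn_barrierW (n : ℕ) (C₀ r m : ℝ) :
    ContDiffOn ℝ (⊤ : ℕ∞) (barrierW n C₀ r m) {y : EuclideanSpace ℝ (Fin n) | y ≠ 0} := by
  intro y hy
  apply ContDiffAt.contDiffWithinAt
  have h1 : ContDiffAt ℝ (⊤ : ℕ∞) (fun z : EuclideanSpace ℝ (Fin n) => ‖z‖) y :=
    contDiffAt_norm ℝ hy
  have h2 := h1.rpow_const_of_ne (p := (2 : ℝ) - n) (norm_ne_zero_iff.mpr hy)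
  unfold barrierW
  exact (contDiffAt_const.mul ((h1.pow 2).sub contDiffAt_const)).add
    (contDiffAt_const.mul (h2.sub contDiffAt_const))

lemma laplacian_barrierW {n : ℕ} (hn : 3 ≤ n) (C₀ r m : ℝ) {y : EuclideanSpace ℝ (Fin n)}
    (hy : y ≠ 0) :
    (∑ i, fderiv ℝ
        (fun z => fderiv ℝ (barrierW n C₀ r m) z (EuclideanSpace.single i 1)) y
        (EuclideanSpace.single i 1)) = C₀ := by
  have hpos : 0 < ‖y‖ := norm_pos_iff.mpr hy
  have hn0 : (n : ℝ) ≠ 0 := by positivity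
  set a := C₀ / n with ha
  set b := barrierA n C₀ r m * (2 - n) with hb
  have key : ∀ i : Fin n, fderiv ℝ
      (fun z => fderiv ℝ (barrierW n C₀ r m) z (EuclideanSpace.single i 1)) y
        (EuclideanSpace.single i 1)
      = (a + b * ‖y‖ ^ (-(n : ℝ))) - n * b * ‖y‖ ^ (-(n : ℝ) - 2) * (y i) ^ 2 := by
    intro i
    have hev : (fun z => fderiv ℝ (barrierW n C₀ r m) z (EuclideanSpace.single i 1))
        =ᶠ[nhds y] fun z => (a + b * ‖z‖ ^ (-(n : ℝ))) * EuclideanSpace.proj (𝕜 := ℝ) i z := by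
      filter_upwards [isOpen_ne.mem_nhds hy] with z hz
      rw [(hasFDerivAt_barrierW hn C₀ r m hz).fderiv]
      simp [ha, hb, EuclideanSpace.inner_single_right]
    rw [hev.fderiv_eq]
    have h1 := (((hasFDerivAt_norm_rpow_of_ne (-(n : ℝ)) hy).const_mul b).const_add a).mul
      (EuclideanSpace.proj (𝕜 := ℝ) i : EuclideanSpace ℝ (Fin n) →L[ℝ] ℝ).hasFDerivAt
    refine (congrArg (fun L => L (EuclideanSpace.single i 1)) h1.fderiv).trans ?_
    simp [EuclideanSpace.inner_single_right]
    ring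
  rw [Finset.sum_congr rfl fun i _ => key i, Finset.sum_sub_distrib, ← Finset.mul_sum,
    ← EuclideanSpace.real_norm_sq_eq]
  have e : ‖y‖ ^ (-(n : ℝ) - 2) * ‖y‖ ^ 2 = ‖y‖ ^ (-(n : ℝ)) := by
    rw [← Real.rpow_natCast, ← Real.rpow_add hpos]; norm_num
  rw [mul_assoc (n * b), e]
  simp only [Finset.sum_const, Finset.card_univ, Fintype.card_fin, nsmul_eq_mul]
  rw [ha]
  field_simp
  ring

lemma rpow_two_sub (k : ℕ) {t : ℝ} (ht : 0 ≤ t) :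
    t ^ ((2 : ℝ) - ((k + 2 : ℕ) : ℝ)) = (t ^ k)⁻¹ := by
  rw [show (2 : ℝ) - ((k + 2 : ℕ) : ℝ) = -(k : ℝ) by push_cast; ring, Real.rpow_neg ht,
    Real.rpow_natCast]

lemma one_lt_two_pow_real {k : ℕ} (hk : 1 ≤ k) : (1 : ℝ) < 2 ^ k :=
  one_lt_pow₀ (by norm_num) (by omega)

lemma barrierA_eq {k : ℕ} (C₀ m : ℝ) {r : ℝ} (hr : 0 < r) :
    barrierA (k + 2) C₀ r m =
      (m + 3 * C₀ / (8 * (k + 2 : ℕ)) * r ^ 2) * r ^ k / (2 ^ k - 1) := by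
  unfold barrierA
  rw [rpow_two_sub k hr.le, rpow_two_sub k (by positivity : (0 : ℝ) ≤ r / 2)]
  have : ((r / 2) ^ k)⁻¹ - (r ^ k)⁻¹ = (2 ^ k - 1) / r ^ k := by
    rw [div_pow]; field_simp
  rw [this, div_div_eq_mul_div]

/-- The inward radial slope of the barrier on the outer sphere is at least `c m / r`, where
`c = k / (2 (2^k - 1))`. -/
lemma barrier_slope {k : ℕ} (hk : 1 ≤ k) {C₀ r m : ℝ} (hC : 0 < C₀) (hr : 0 < r)
    (hr0 : r ≤ k / (2 * (2 ^ k - 1)) * (k + 2 : ℕ) / C₀) (hm : r ≤ m) :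
    k / (2 * (2 ^ k - 1)) * m / r ≤
      barrierA (k + 2) C₀ r m * k / r ^ (k + 1) - C₀ / (k + 2 : ℕ) * r := by
  have hK : (0 : ℝ) < 2 ^ k - 1 := sub_pos.mpr (one_lt_two_pow_real hk)
  have hN : (0 : ℝ) < (k + 2 : ℕ) := by positivity
  rw [barrierA_eq C₀ m hr]
  set N : ℝ := ((k + 2 : ℕ) : ℝ)
  set K : ℝ := 2 ^ k - 1
  set c : ℝ := k / (2 * K) with hc
  have hc0 : 0 ≤ c := by positivity
  have h1 : C₀ / N * r ≤ c := by
    rw [le_div_iff₀ hC] at hr0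
    rw [div_mul_eq_mul_div, div_le_iff₀ hN]; linarith
  have h2 : (m + 3 * C₀ / (8 * N) * r ^ 2) * r ^ k / K * k / r ^ (k + 1)
      = 2 * c * m / r + 2 * c * (3 * C₀ / (8 * N)) * r := by
    rw [hc, pow_succ]; field_simp; ring
  have h3 : 0 ≤ 2 * c * (3 * C₀ / (8 * N)) * r := by positivity
  have h4 : c ≤ c * m / r := by
    rw [le_div_iff₀ hr]; exact mul_le_mul_of_nonneg_left hm hc0
  have h5 : 2 * c * m / r = c * m / r + c * m / r := by ring
  rw [h2]
  linarith

/-- The convex function `t ↦ t^{-k}` lies above its tangent line at `r`. -/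
lemma inv_pow_sub_ge (k : ℕ) {t r : ℝ} (ht : 0 < t) (htr : t ≤ r) :
    k / r ^ (k + 1) * (r - t) ≤ (t ^ k)⁻¹ - (r ^ k)⁻¹ := by
  have hr : 0 < r := ht.trans_le htr
  have h1 := one_add_mul_le_pow (a := r / t - 1) (by linarith [div_pos hr ht]) k
  have h2 : (r - t) / r ≤ r / t - 1 := by
    rw [div_sub_one ht.ne']
    exact div_le_div_of_nonneg_left (by linarith) ht htr
  have h3 : k * ((r - t) / r) ≤ (r / t) ^ k - 1 := by
    have := mul_le_mul_of_nonneg_left h2 (Nat.cast_nonneg (α := ℝ) k)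
    rw [add_sub_cancel] at h1
    linarith
  have h4 := mul_le_mul_of_nonneg_right h3 (by positivity : 0 ≤ (r ^ k)⁻¹)
  calc k / r ^ (k + 1) * (r - t) = k * ((r - t) / r) * (r ^ k)⁻¹ := by
        rw [pow_succ]; field_simp
    _ ≤ _ := h4
    _ = _ := by rw [div_pow]; field_simp

/-- the barrier `w` is smooth away from the origin with `Δw = C₀`, vanishes on
`{|y| = r}`, equals `m` on `{|y| = r/2}`; moreover there are `c = c(n) > 0` and, for each
`C₀ > 0`, an `r₀ = r₀(n, C₀) > 0` such that for `r ≤ r₀` and `m ≥ r` the barrier is positive in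
the open annulus `{r/2 < |y| < r}` and `|∇w| ≥ c·m/r` on the outer sphere `{|y| = r}`. -/
theorem stmt_15 (n : ℕ) (hn : 3 ≤ n) :
    (∀ C₀ r m : ℝ, 0 < C₀ → 0 < r → 0 < m →
      (ContDiffOn ℝ (⊤ : ℕ∞) (barrierW n C₀ r m) {y : EuclideanSpace ℝ (Fin n) | y ≠ 0} ∧
        ∀ y : EuclideanSpace ℝ (Fin n), y ≠ 0 →
          (∑ i, fderiv ℝ
              (fun z => fderiv ℝ (barrierW n C₀ r m) z (EuclideanSpace.single i 1)) y
              (EuclideanSpace.single i 1)) = C₀) ∧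
      (∀ y : EuclideanSpace ℝ (Fin n), ‖y‖ = r → barrierW n C₀ r m y = 0) ∧
      (∀ y : EuclideanSpace ℝ (Fin n), ‖y‖ = r / 2 → barrierW n C₀ r m y = m)) ∧
    ∃ c : ℝ, 0 < c ∧ ∀ C₀ : ℝ, 0 < C₀ → ∃ r₀ : ℝ, 0 < r₀ ∧
      ∀ r m : ℝ, 0 < r → r ≤ r₀ → r ≤ m →
        (∀ y : EuclideanSpace ℝ (Fin n), r / 2 < ‖y‖ → ‖y‖ < r →
          0 < barrierW n C₀ r m y) ∧
        (∀ y : EuclideanSpace ℝ (Fin n), ‖y‖ = r →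
          c * m / r ≤ ‖fderiv ℝ (barrierW n C₀ r m) y‖) := by
  obtain ⟨k, rfl⟩ : ∃ k, n = k + 2 := ⟨n - 2, by omega⟩
  have hk : 1 ≤ k := by omega
  have hK : (0 : ℝ) < 2 ^ k - 1 := sub_pos.mpr (one_lt_two_pow_real hk)
  have hk0 : (0 : ℝ) < k := by exact_mod_cast hk
  have hN : (0 : ℝ) < (k + 2 : ℕ) := by positivity
  refine ⟨fun C₀ r m hC hr hm => ⟨⟨contDiffOn_barrierW _ C₀ r m,
    fun y hy => laplacian_barrierW hn C₀ r m hy⟩, ?_, ?_⟩, ?_⟩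
  · intro y hy
    simp [barrierW, hy]
  · intro y hy
    rw [barrierW, hy, barrierA_eq C₀ m hr, rpow_two_sub k hr.le,
      rpow_two_sub k (by positivity : (0 : ℝ) ≤ r / 2), div_pow r 2 k]
    field_simp
    ring
  · refine ⟨k / (2 * (2 ^ k - 1)), by positivity, fun C₀ hC =>
      ⟨k / (2 * (2 ^ k - 1)) * (k + 2 : ℕ) / C₀, by positivity, fun r m hr hr0 hm => ?_⟩⟩
    have hm0 : 0 < m := hr.trans_le hm
    have hs := barrier_slope hk hC hr hr0 hm
    have hs0 : 0 < k / (2 * (2 ^ k - 1)) * m / r := by positivity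
    have hA : 0 ≤ barrierA (k + 2) C₀ r m := by
      rw [barrierA_eq C₀ m hr]; positivity
    constructor
    · intro y hy1 hy2
      have ht : 0 < ‖y‖ := by linarith
      rw [barrierW, rpow_two_sub k hr.le, rpow_two_sub k ht.le]
      have h1 := mul_le_mul_of_nonneg_left (inv_pow_sub_ge k ht hy2.le) hA
      have h2 : 0 ≤ C₀ / (2 * (k + 2 : ℕ)) * (r - ‖y‖) ^ 2 := by positivity
      have h3 := mul_pos (hs0.trans_le hs) (sub_pos.mpr hy2)
      have h4 : C₀ / (2 * (k + 2 : ℕ)) * (‖y‖ ^ 2 - r ^ 2)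
          = C₀ / (2 * (k + 2 : ℕ)) * (r - ‖y‖) ^ 2 - C₀ / (k + 2 : ℕ) * r * (r - ‖y‖) := by
        field_simp; ring
      have h5 : (barrierA (k + 2) C₀ r m * k / r ^ (k + 1) - C₀ / (k + 2 : ℕ) * r) * (r - ‖y‖)
          = barrierA (k + 2) C₀ r m * (k / r ^ (k + 1) * (r - ‖y‖))
            - C₀ / (k + 2 : ℕ) * r * (r - ‖y‖) := by ring
      linarith
    · intro y hy
      have hy0 : y ≠ 0 := norm_pos_iff.mp (hy ▸ hr)
      rw [(hasFDerivAt_barrierW hn C₀ r m hy0).fderiv, norm_smul, innerSL_apply_norm, hy,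
        Real.norm_eq_abs, Real.rpow_neg hr.le, Real.rpow_natCast]
      refine hs.trans ?_
      refine le_trans (le_of_eq ?_) (mul_le_mul_of_nonneg_right (neg_le_abs _) hr.le)
      rw [show (2 : ℝ) - ((k + 2 : ℕ) : ℝ) = -(k : ℝ) by push_cast; ring]
      field_simp
      ring
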